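/- Assume hypotheses (H). Then for every ε > 0 there exists Q_0 such that for every real number Q ≥ Q_0 the following holds: if a point of ℤ^p can be written as λ_1e_1 + … + λ_ke_k + u with real numbers λ_1,…,λ_k satisfying |λ_j| ≤ Q^{τ_j} for every j ∈ {1,…,k}, and with u orthogonal to the ℝ-span of e_1,…,e_k and ‖u‖ ≤ Q^{−1−ε}, then this point is the zero vector. -/

import Mathlib

/-!
By compactness of a torus, the indices at which all the cosines stay away from `0` have bounded
gaps. Writing `Q = exp t`, sampling the forms at such indices gives, for every real `t`, an integer
form `L t` with `‖L t‖ ≤ exp (t + o(t))` and `|L t (e j)| = exp (-τ j * t + o(t))`.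

If nonzero integer points `∑ j, lam t j • e j + u t` as in the theorem existed for arbitrarily large
`t`, choose an ultrafilter of such `t`; along it every `|lam t j|` has an exact exponential rate
`α j ≤ τ j`. If all `α j` are negative, the integer points tend to `0`, so they vanish. Otherwise
evaluate `L (s * t)` at them: the `j`-th term has rate `α j - τ j * s`, the contribution of `u t`
has rate at most `s - 1 - ε`, and for a suitable `s > 0` one of the terms dominates everything else
and has a negative rate. The integers obtained then tend to `0` without vanishing, a contradiction.
-/

open Asymptotics Filter Real Topology

section ExpGrowth

variable {E F G : Type*} [NormedAddCommGroup E] [NormedAddCommGroup F] [NormedAddCommGroup G]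
  {l : Filter ℝ} {x : ℝ → E} {y : ℝ → F} {z : ℝ → G} {a b : ℝ}

/-- `‖x t‖ ≤ exp (a * t + o(t))` along `l`: the exponential growth rate of `x` is at most `a`. The
slack `a < b` encodes the `o(t)`. -/
def ExpGrowthLE (l : Filter ℝ) (x : ℝ → E) (a : ℝ) : Prop :=
  ∀ b, a < b → ∀ᶠ t in l, ‖x t‖ ≤ exp (b * t)

/-- `exp (a * t - o(t)) ≤ ‖x t‖` along `l`: the exponential growth rate of `x` is at least `a`. The
slack `b < a` encodes the `o(t)`. -/
def ExpGrowthGE (l : Filter ℝ) (x : ℝ → E) (a : ℝ) : Prop :=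
  ∀ b, b < a → ∀ᶠ t in l, exp (b * t) ≤ ‖x t‖

theorem ExpGrowthLE.of_norm_le_mul (hx : ExpGrowthLE l x a) (hy : ExpGrowthLE l y b)
    (hz : ∀ᶠ t in l, ‖z t‖ ≤ ‖x t‖ * ‖y t‖) : ExpGrowthLE l z (a + b) := by
  intro c hc
  obtain ⟨d, had, hdc⟩ := exists_between (lt_sub_iff_add_lt.2 hc)
  filter_upwards [hx d had, hy (c - d) (by linarith), hz] with t hxt hyt hzt
  calc ‖z t‖ ≤ ‖x t‖ * ‖y t‖ := hzt
    _ ≤ exp (d * t) * exp ((c - d) * t) := by gcongr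
    _ = exp (c * t) := by rw [← exp_add]; ring_nf

theorem ExpGrowthGE.of_mul_le_norm (hx : ExpGrowthGE l x a) (hy : ExpGrowthGE l y b)
    (hz : ∀ᶠ t in l, ‖x t‖ * ‖y t‖ ≤ ‖z t‖) : ExpGrowthGE l z (a + b) := by
  intro c hc
  obtain ⟨d, hcd, hda⟩ := exists_between (sub_lt_iff_lt_add.2 hc)
  filter_upwards [hx d hda, hy (c - d) (by linarith), hz] with t hxt hyt hzt
  calc exp (c * t) = exp (d * t) * exp ((c - d) * t) := by rw [← exp_add]; ring_nf
    _ ≤ ‖x t‖ * ‖y t‖ := by gcongr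
    _ ≤ ‖z t‖ := hzt

theorem ExpGrowthLE.comp_const_mul (hx : ExpGrowthLE atTop x a) (hl : l ≤ atTop) {s : ℝ}
    (hs : 0 < s) : ExpGrowthLE l (fun t => x (s * t)) (a * s) := by
  intro b hb
  filter_upwards [((tendsto_id.const_mul_atTop hs).mono_left hl).eventually
    (hx (b / s) ((lt_div_iff₀ hs).2 hb))] with t ht
  rwa [id, ← mul_assoc, div_mul_cancel₀ b hs.ne'] at ht

theorem ExpGrowthGE.comp_const_mul (hx : ExpGrowthGE atTop x a) (hl : l ≤ atTop) {s : ℝ}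
    (hs : 0 < s) : ExpGrowthGE l (fun t => x (s * t)) (a * s) := by
  intro b hb
  filter_upwards [((tendsto_id.const_mul_atTop hs).mono_left hl).eventually
    (hx (b / s) ((div_lt_iff₀ hs).2 hb))] with t ht
  rwa [id, ← mul_assoc, div_mul_cancel₀ b hs.ne'] at ht

theorem expGrowthLE_of_eventually_norm_le (hl : l ≤ atTop) {C : ℝ} (hx : ∀ᶠ t in l, ‖x t‖ ≤ C) :
    ExpGrowthLE l x 0 := by
  intro b hb
  have hexp : Tendsto (fun t => exp (b * t)) l atTop :=
    tendsto_exp_atTop.comp ((tendsto_id.const_mul_atTop hb).mono_left hl)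
  filter_upwards [hx, hexp.eventually_ge_atTop C] with t hxt ht using hxt.trans ht

theorem expGrowthGE_of_eventually_le_norm (hl : l ≤ atTop) {c : ℝ} (hc : 0 < c)
    (hx : ∀ᶠ t in l, c ≤ ‖x t‖) : ExpGrowthGE l x 0 := by
  intro b hb
  have hexp : Tendsto (fun t => exp (b * t)) l (𝓝 0) :=
    tendsto_exp_atBot.comp ((tendsto_id.const_mul_atTop_of_neg hb).mono_left hl)
  filter_upwards [hx, hexp.eventually_le_const hc] with t hxt ht using ht.trans hxt

theorem tendsto_log_mul_div {q y : ℝ → ℝ} (hl : l ≤ atTop) (hq : (log ∘ q) ~[l] id)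
    (hy : Tendsto y l (𝓝 a)) : Tendsto (fun t => log (q t) * y t / t) l (𝓝 a) := by
  have hratio := (isEquivalent_iff_tendsto_one (hl (eventually_ne_atTop 0))).1 hq
  simpa [div_mul_eq_mul_div] using hratio.mul hy

theorem expGrowthLE_rpow {q y : ℝ → ℝ} (hl : l ≤ atTop) (hq0 : ∀ᶠ t in l, 0 < q t)
    (hq : (log ∘ q) ~[l] id) (hy : Tendsto y l (𝓝 a)) : ExpGrowthLE l (fun t => q t ^ y t) a := by
  intro b hb
  filter_upwards [(tendsto_log_mul_div hl hq hy).eventually_le_const hb, hq0,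
    hl (eventually_gt_atTop 0)] with t hbt hqt ht
  rw [norm_of_nonneg (rpow_nonneg hqt.le _), rpow_def_of_pos hqt]
  exact exp_le_exp.2 ((div_le_iff₀ ht).1 hbt)

theorem expGrowthGE_rpow {q y : ℝ → ℝ} (hl : l ≤ atTop) (hq0 : ∀ᶠ t in l, 0 < q t)
    (hq : (log ∘ q) ~[l] id) (hy : Tendsto y l (𝓝 a)) : ExpGrowthGE l (fun t => q t ^ y t) a := by
  intro b hb
  filter_upwards [(tendsto_log_mul_div hl hq hy).eventually_const_le hb, hq0,
    hl (eventually_gt_atTop 0)] with t hbt hqt ht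
  rw [norm_of_nonneg (rpow_nonneg hqt.le _), rpow_def_of_pos hqt]
  exact exp_le_exp.2 ((le_div_iff₀ ht).1 hbt)

theorem expGrowthLE_of_abs_eq_rpow_mul {q y x w η : ℝ → ℝ} {C : ℝ} (hl : l ≤ atTop)
    (hq0 : ∀ᶠ t in l, 0 < q t) (hq : (log ∘ q) ~[l] id) (hy : Tendsto y l (𝓝 a))
    (hw : ∀ t, |w t| ≤ C) (hη : Tendsto η l (𝓝 0))
    (hx : ∀ᶠ t in l, |x t| = q t ^ y t * |w t + η t|) : ExpGrowthLE l x a := by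
  have hfactor : ExpGrowthLE l (fun t => w t + η t) 0 := by
    refine expGrowthLE_of_eventually_norm_le hl (C := C + 1) ?_
    filter_upwards [hη.norm.eventually_le_const (by simp : ‖(0 : ℝ)‖ < 1)] with t ht
    exact norm_add_le_of_le (hw t) ht
  refine add_zero a ▸ (expGrowthLE_rpow hl hq0 hq hy).of_norm_le_mul hfactor ?_
  filter_upwards [hx, hq0] with t hxt hqt
  rw [norm_of_nonneg (rpow_nonneg hqt.le _)]
  exact hxt.le

theorem expGrowthGE_of_abs_eq_rpow_mul {q y x w η : ℝ → ℝ} {c : ℝ} (hl : l ≤ atTop)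
    (hq0 : ∀ᶠ t in l, 0 < q t) (hq : (log ∘ q) ~[l] id) (hy : Tendsto y l (𝓝 a))
    (hc : 0 < c) (hw : ∀ t, c ≤ |w t|) (hη : Tendsto η l (𝓝 0))
    (hx : ∀ᶠ t in l, |x t| = q t ^ y t * |w t + η t|) : ExpGrowthGE l x a := by
  have hfactor : ExpGrowthGE l (fun t => w t + η t) 0 := by
    refine expGrowthGE_of_eventually_le_norm hl (half_pos hc) ?_
    filter_upwards [hη.norm.eventually_le_const (by simpa using half_pos hc : ‖(0 : ℝ)‖ < c / 2)]
      with t ht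
    linarith [hw t, norm_sub_le_norm_add (w t) (η t), norm_eq_abs (w t)]
  refine add_zero a ▸ (expGrowthGE_rpow hl hq0 hq hy).of_mul_le_norm hfactor ?_
  filter_upwards [hx, hq0] with t hxt hqt
  rw [norm_of_nonneg (rpow_nonneg hqt.le _)]
  exact hxt.ge

theorem ExpGrowthLE.isLittleO (hx : ExpGrowthLE l x a) (hy : ExpGrowthGE l y b) (hl : l ≤ atTop)
    (hab : a < b) : x =o[l] y := by
  obtain ⟨c, hac, hcb⟩ := exists_between hab
  obtain ⟨d, hcd, hdb⟩ := exists_between hcb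
  have hxc : x =O[l] fun t => exp (c * t) :=
    .of_bound 1 ((hx c hac).mono fun t ht => by simpa using ht)
  have hdy : (fun t => exp (d * t)) =O[l] y :=
    .of_bound 1 ((hy d hdb).mono fun t ht => by simpa using ht)
  have hcd' : (fun t => exp (c * t)) =o[l] fun t => exp (d * t) := by
    simp only [isLittleO_exp_comp_exp_comp, ← sub_mul]
    exact (tendsto_id.const_mul_atTop (sub_pos.2 hcd)).mono_left hl
  exact (hxc.trans_isLittleO hcd').trans_isBigO hdy

theorem ExpGrowthLE.tendsto_zero (hx : ExpGrowthLE l x a) (hl : l ≤ atTop) (ha : a < 0) :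
    Tendsto x l (𝓝 0) :=
  (isLittleO_one_iff ℝ).1 <| hx.isLittleO
    (expGrowthGE_of_eventually_le_norm hl one_pos (.of_forall fun _ => norm_one.ge)) hl ha

theorem ExpGrowthGE.eventually_ne_zero (hx : ExpGrowthGE l x a) : ∀ᶠ t in l, x t ≠ 0 :=
  (hx (a - 1) (sub_one_lt a)).mono fun _ ht => norm_pos_iff.1 ((exp_pos _).trans_le ht)

/-- The floor `a` stands in for the rate `-∞` of functions that are too small. -/
theorem exists_expGrowth_of_ultrafilter {U : Ultrafilter ℝ} (hU : (U : Filter ℝ) ≤ atTop)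
    {c : ℝ} (hac : a ≤ c) (hx : ∀ᶠ t in U, ‖x t‖ ≤ exp (c * t)) :
    ∃ α ≤ c, ExpGrowthLE U x α ∧ (a < α → ExpGrowthGE U x α) := by
  let S : Set ℝ := {b | a ≤ b ∧ ∀ᶠ t in U, ‖x t‖ ≤ exp (b * t)}
  have hcS : c ∈ S := ⟨hac, hx⟩
  have hS : BddBelow S := ⟨a, fun b hb => hb.1⟩
  have hpos : ∀ᶠ t in U, (0 : ℝ) ≤ t := hU (eventually_ge_atTop 0)
  refine ⟨sInf S, csInf_le hS hcS, fun b hb => ?_, fun haα b hb => ?_⟩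
  · obtain ⟨b', ⟨-, hb'⟩, hb'b⟩ := exists_lt_of_csInf_lt ⟨c, hcS⟩ hb
    filter_upwards [hb', hpos] with t hxt ht
    exact hxt.trans (by gcongr)
  · have hmax : ∀ᶠ t in U, ¬‖x t‖ ≤ exp (max a b * t) := Ultrafilter.eventually_not.2 fun h =>
      notMem_of_lt_csInf (max_lt haα hb) hS ⟨le_max_left a b, h⟩
    filter_upwards [hmax, hpos] with t hxt ht
    calc exp (b * t) ≤ exp (max a b * t) := by gcongr; exact le_max_right a b
      _ ≤ ‖x t‖ := (not_le.1 hxt).le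

end ExpGrowth

section Criterion

theorem eventually_nhds_zero_eq_zero_of_int :
    ∀ᶠ x : ℝ in 𝓝 0, (∃ m : ℤ, x = m) → x = 0 := by
  filter_upwards [Metric.ball_mem_nhds (0 : ℝ) one_pos]
  rintro _ hx ⟨m, rfl⟩
  rw [mem_ball_zero_iff, norm_eq_abs] at hx
  exact_mod_cast Int.abs_lt_one_iff.1 (by exact_mod_cast hx)

theorem not_isEquivalent_of_int {β : Type*} {l : Filter β} [l.NeBot] {f g : β → ℝ}
    (hf : ∀ᶠ t in l, ∃ m : ℤ, f t = m) (hg : Tendsto g l (𝓝 0)) (hg0 : ∀ᶠ t in l, g t ≠ 0) :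
    ¬f ~[l] g := by
  intro hfg
  have hf0 : f =ᶠ[l] 0 :=
    ((hfg.symm.tendsto_nhds hg).eventually eventually_nhds_zero_eq_zero_of_int).mp
      (hf.mono fun _ hm h => h hm)
  have hg0' : g =ᶠ[l] 0 := isEquivalent_zero_iff_eventually_zero.1
    (hfg.symm.trans (isEquivalent_zero_iff_eventually_zero.2 hf0))
  obtain ⟨t, ht, ht'⟩ := (hg0.and hg0').exists
  exact ht ht'

theorem isEquivalent_sum_add {ι β E : Type*} [Fintype ι] [NormedAddCommGroup E] {l : Filter β}
    {x : ι → β → E} {v : β → E} {i : ι} (hx : ∀ j, j ≠ i → x j =o[l] x i) (hv : v =o[l] x i) :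
    (∑ j, x j + v) ~[l] x i := by
  classical
  rw [← Finset.add_sum_erase _ x (Finset.mem_univ i)]
  exact (IsEquivalent.refl.add_isLittleO
    (.sum fun j hj => hx j (Finset.ne_of_mem_erase hj))).add_isLittleO hv

/-- The upper envelope of the lines `s ↦ α j - τ j * s` vanishes at `σ = max_j α j / τ j ∈ [0, 1]`.
Just to the right of `σ` it is still close to `0`, and it is attained only by the line with the
smallest `τ j` among those vanishing at `σ`. -/
theorem exists_dominant_scale {ι : Type*} [Finite ι] {τ α : ι → ℝ} (hτ : ∀ j, 0 < τ j)
    (hτinj : Function.Injective τ) (hα : ∀ j, α j ≤ τ j) (hα0 : ∃ j, 0 ≤ α j) {ε : ℝ}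
    (hε : 0 < ε) :
    ∃ s > 0, ∃ i, α i - τ i * s < 0 ∧ s - 1 - ε < α i - τ i * s ∧
      ∀ j, j ≠ i → α j - τ j * s < α i - τ i * s := by
  obtain ⟨j₀, hj₀⟩ := hα0
  have : Nonempty ι := ⟨j₀⟩
  obtain ⟨j₁, hj₁⟩ := Finite.exists_max fun j => α j / τ j
  set σ := α j₁ / τ j₁
  have hσ0 : 0 ≤ σ := (div_nonneg hj₀ (hτ j₀).le).trans (hj₁ j₀)
  have hσ1 : σ ≤ 1 := div_le_one_of_le₀ (hα j₁) (hτ j₁).le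
  have hle : ∀ j, α j ≤ τ j * σ := fun j => (div_le_iff₀' (hτ j)).1 (hj₁ j)
  obtain ⟨i, hi : α i = τ i * σ, hmin⟩ := Set.exists_min_image {j | α j = τ j * σ} τ
    (Set.toFinite _) ⟨j₁, (mul_div_cancel₀ (α j₁) (hτ j₁).ne').symm⟩
  have hpos : ∀ᶠ s in 𝓝[>] σ, σ < s := eventually_mem_nhdsWithin
  have hlower : ∀ᶠ s in 𝓝[>] σ, s - 1 - ε < α i - τ i * s :=
    (ContinuousAt.eventually_lt (by fun_prop) (by fun_prop)
      (by linarith)).filter_mono nhdsWithin_le_nhds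
  have hdom : ∀ᶠ s in 𝓝[>] σ, ∀ j, j ≠ i → α j - τ j * s < α i - τ i * s := by
    refine eventually_all.2 fun j => eventually_imp_distrib_left.2 fun hji => ?_
    rcases (hle j).lt_or_eq with hj | hj
    · exact (ContinuousAt.eventually_lt (by fun_prop) (by fun_prop)
        (by linarith)).filter_mono nhdsWithin_le_nhds
    · have hτij : τ i < τ j := (hmin j hj).lt_of_ne fun h => hji (hτinj h).symm
      filter_upwards [hpos] with s hs
      rw [hi, hj, ← mul_sub, ← mul_sub]
      exact mul_lt_mul_of_neg_right hτij (sub_neg.2 hs)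
  obtain ⟨s, hs, hls, hds⟩ := (hpos.and (hlower.and hdom)).exists
  have hneg : α i - τ i * s < 0 := by
    rw [hi, ← mul_sub]
    exact mul_neg_of_pos_of_neg (hτ i) (sub_neg.2 hs)
  exact ⟨s, hσ0.trans_lt hs, i, hneg, hls, hds⟩

variable {ι V : Type*} [Fintype ι] [NormedAddCommGroup V] [NormedSpace ℝ V]
  {e : ι → V} {τ α : ι → ℝ} {L : ℝ → V →L[ℝ] ℝ} {Λ : Set V} {ε : ℝ}
  {lam : ℝ → ι → ℝ} {u : ℝ → V}

theorem tendsto_sum_smul_add_zero {l : Filter ℝ} (hl : l ≤ atTop) (e : ι → V) {a : ℝ}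
    (hlam : ∀ j, ExpGrowthLE l (fun t => lam t j) (α j)) (hα : ∀ j, α j < 0)
    (hu : ExpGrowthLE l u a) (ha : a < 0) :
    Tendsto (fun t => ∑ j, lam t j • e j + u t) l (𝓝 0) := by
  have hsum : Tendsto (fun t => ∑ j, lam t j • e j) l (𝓝 (∑ j, (0 : ℝ) • e j)) :=
    tendsto_finsetSum _ fun j _ => ((hlam j).tendsto_zero hl (hα j)).smul_const (e j)
  simpa using hsum.add (hu.tendsto_zero hl ha)

theorem isEquivalent_apply_sum_smul_add {l : Filter ℝ} (hl : l ≤ atTop) {ρ : ι → ℝ} {γ : ℝ} {i : ι}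
    (hle : ∀ j, ExpGrowthLE l (fun t => lam t j * L t (e j)) (ρ j))
    (hge : ExpGrowthGE l (fun t => lam t i * L t (e i)) (ρ i))
    (hu : ExpGrowthLE l (fun t => L t (u t)) γ) (hρ : ∀ j, j ≠ i → ρ j < ρ i) (hγ : γ < ρ i) :
    (fun t => L t (∑ j, lam t j • e j + u t)) ~[l] fun t => lam t i * L t (e i) := by
  refine (isEquivalent_sum_add (x := fun j t => lam t j * L t (e j))
    (fun j hj => (hle j).isLittleO hge hl (hρ j hj)) (hu.isLittleO hge hl hγ)).congr_left
    (.of_forall fun t => ?_)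
  simp

theorem eventually_eq_zero_of_ultrafilter {U : Ultrafilter ℝ} (hU : (U : Filter ℝ) ≤ atTop)
    (hτ : ∀ j, 0 < τ j) (hτinj : Function.Injective τ) (hε : 0 < ε)
    (hΛ : ∀ᶠ v in 𝓝 (0 : V), v ∈ Λ → v = 0) (hLΛ : ∀ t, ∀ v ∈ Λ, ∃ m : ℤ, L t v = m)
    (hL : ExpGrowthLE atTop L 1) (hle : ∀ j, ExpGrowthLE atTop (fun t => L t (e j)) (-τ j))
    (hge : ∀ j, ExpGrowthGE atTop (fun t => L t (e j)) (-τ j))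
    (hlam : ∀ᶠ t in U, ∀ j, |lam t j| ≤ exp (τ j * t))
    (hu : ExpGrowthLE U u (-1 - ε)) (hmem : ∀ᶠ t in U, ∑ j, lam t j • e j + u t ∈ Λ) :
    ∀ᶠ t in U, ∑ j, lam t j • e j + u t = 0 := by
  have hrate (j : ι) := exists_expGrowth_of_ultrafilter (x := fun t => lam t j) (a := -1 - ε)
    (c := τ j) hU (by linarith [hτ j]) (eventually_all.1 hlam j)
  choose α hατ hlamle hlamge using hrate
  by_cases hα : ∃ j, 0 ≤ α j
  · obtain ⟨s, hs, i, hneg, hlower, hdom⟩ := exists_dominant_scale hτ hτinj hατ hα hε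
    have hge_i : ExpGrowthGE U (fun t => lam t i * L (s * t) (e i)) (α i + -τ i * s) :=
      (hlamge i (by linarith [mul_pos (hτ i) hs])).of_mul_le_norm ((hge i).comp_const_mul hU hs)
        (.of_forall fun t => (norm_mul _ _).ge)
    have hle' (j : ι) : ExpGrowthLE U (fun t => lam t j * L (s * t) (e j)) (α j + -τ j * s) :=
      (hlamle j).of_norm_le_mul ((hle j).comp_const_mul hU hs)
        (.of_forall fun t => (norm_mul _ _).le)
    have hle_u : ExpGrowthLE U (fun t => L (s * t) (u t)) (1 * s + (-1 - ε)) :=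
      (hL.comp_const_mul hU hs).of_norm_le_mul hu
        (.of_forall fun t => (L (s * t)).le_opNorm (u t))
    have hequiv := isEquivalent_apply_sum_smul_add (L := fun t => L (s * t)) hU hle' hge_i hle_u
      (fun j hj => by linarith [hdom j hj]) (by linarith)
    refine (not_isEquivalent_of_int ?_ ((hle' i).tendsto_zero hU (by linarith))
      hge_i.eventually_ne_zero hequiv).elim
    filter_upwards [hmem] with t ht using hLΛ _ _ ht
  · push Not at hα
    have hlim := tendsto_sum_smul_add_zero hU e hlamle hα hu (by linarith)
    filter_upwards [hlim.eventually hΛ, hmem] with t ht hmt using ht hmt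

theorem eventually_forall_eq_zero (hτ : ∀ j, 0 < τ j) (hτinj : Function.Injective τ) (hε : 0 < ε)
    (hΛ : ∀ᶠ v in 𝓝 (0 : V), v ∈ Λ → v = 0) (hLΛ : ∀ t, ∀ v ∈ Λ, ∃ m : ℤ, L t v = m)
    (hL : ExpGrowthLE atTop L 1) (hle : ∀ j, ExpGrowthLE atTop (fun t => L t (e j)) (-τ j))
    (hge : ∀ j, ExpGrowthGE atTop (fun t => L t (e j)) (-τ j)) :
    ∀ᶠ t in atTop, ∀ (lam : ι → ℝ) (u : V), (∀ j, |lam j| ≤ exp (τ j * t)) →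
      ‖u‖ ≤ exp ((-1 - ε) * t) → ∑ j, lam j • e j + u ∈ Λ → ∑ j, lam j • e j + u = 0 := by
  refine mem_iff_ultrafilter.2 fun U hU => ?_
  by_contra hfail
  have hbad := Ultrafilter.eventually_not.2 hfail
  push Not at hbad
  obtain ⟨lam, hlam⟩ := hbad.choice
  obtain ⟨u, hlamu⟩ := hlam.choice
  simp only [eventually_and] at hlamu
  obtain ⟨hlamτ, huε, hmem, hne⟩ := hlamu
  have hu : ExpGrowthLE U u (-1 - ε) := fun b hb => by
    filter_upwards [huε, hU (eventually_ge_atTop 0)] with t hut ht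
    exact hut.trans (by gcongr)
  have hzero := eventually_eq_zero_of_ultrafilter hU hτ hτinj hε hΛ hLΛ hL hle hge hlamτ hu hmem
  obtain ⟨t, ht0, htne⟩ := (hzero.and hne).exists
  exact htne ht0

end Criterion

section Sampling

/-- A syndetic set of natural numbers, i.e. one with bounded gaps: sampling a slowly varying
sequence along it does not change the asymptotics. -/
def IsSyndetic (G : Set ℕ) : Prop :=
  ∃ N, ∀ m, ∃ n ∈ G, m ≤ n ∧ n ≤ m + N

theorem isSyndetic_setOf_pow_mem {A : Type*} [Group A] [TopologicalSpace A] [IsTopologicalGroup A]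
    [CompactSpace A] {x : A} {U : Set A} (hU : IsOpen U) {n₀ : ℕ} (hn₀ : x ^ n₀ ∈ U) :
    IsSyndetic {n | x ^ n ∈ U} := by
  have hcover : ((Subgroup.zpowers x).topologicalClosure : Set A) ⊆
      ⋃ a : ℕ, {y | y * x ^ a ∈ U} := by
    intro y hy
    have hcluster : MapClusterPt (y⁻¹ * x ^ n₀) atTop (x ^ · : ℕ → A) :=
      mapClusterPt_atTop_pow_iff_mem_topologicalClosure_zpowers.2 <|
        mul_mem (inv_mem hy) (pow_mem (Subgroup.le_topologicalClosure _
          (Subgroup.mem_zpowers x)) n₀)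
    have hnhds : {z | y * z ∈ U} ∈ 𝓝 (y⁻¹ * x ^ n₀) :=
      (hU.preimage (continuous_const_mul y)).mem_nhds (by simpa using hn₀)
    obtain ⟨a, ha⟩ := (hcluster.frequently hnhds).exists
    exact Set.mem_iUnion.2 ⟨a, ha⟩
  obtain ⟨s, hs⟩ := (Subgroup.isClosed_topologicalClosure _).isCompact.elim_finite_subcover _
    (fun a => hU.preimage (continuous_mul_const (x ^ a))) hcover
  refine ⟨s.sup id, fun m => ?_⟩
  have hxm : x ^ m ∈ (Subgroup.zpowers x).topologicalClosure :=
    Subgroup.le_topologicalClosure _ (pow_mem (Subgroup.mem_zpowers x) m)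
  obtain ⟨a, has, ha⟩ := Set.mem_iUnion₂.1 (hs hxm)
  exact ⟨m + a, by simpa [pow_add] using ha, Nat.le_add_right m a,
    Nat.add_le_add_left (Finset.le_sup (f := id) has) m⟩

theorem exists_isSyndetic_setOf_le_abs_cos {ι : Type*} [Finite ι] {ω φ : ι → ℝ} {n₀ : ℕ}
    (hn₀ : ∀ j, cos (n₀ * ω j + φ j) ≠ 0) :
    ∃ c > 0, IsSyndetic {n : ℕ | ∀ j, c ≤ |cos (n * ω j + φ j)|} := by
  have hsmall : ∀ᶠ c : ℝ in 𝓝[>] 0, ∀ j, c < |cos (n₀ * ω j + φ j)| := eventually_all.2 fun j =>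
    (eventually_lt_nhds (abs_pos.2 (hn₀ j))).filter_mono nhdsWithin_le_nhds
  obtain ⟨c, hc, hc0 : 0 < c⟩ := (hsmall.and eventually_mem_nhdsWithin).exists
  let x : ι → Circle := fun j => Circle.exp (ω j)
  let U : Set (ι → Circle) := {z | ∀ j, c < |((z j * Circle.exp (φ j) : Circle) : ℂ).re|}
  have hxU (n : ℕ) : x ^ n ∈ U ↔ ∀ j, c < |cos (n * ω j + φ j)| := by
    refine forall_congr' fun j => ?_
    rw [Pi.pow_apply, ← Circle.exp_natCast_mul, ← Circle.exp_add, Circle.coe_exp,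
      Complex.exp_ofReal_mul_I_re]
  have hU : IsOpen U := by
    simp only [U, Set.ofPred_forall]
    exact isOpen_iInter_of_finite fun j => isOpen_lt (by fun_prop) (by fun_prop)
  obtain ⟨N, hN⟩ := isSyndetic_setOf_pow_mem hU ((hxU n₀).2 hc)
  refine ⟨c, hc0, N, fun m => ?_⟩
  obtain ⟨n, hn, hmn⟩ := hN m
  exact ⟨n, fun j => ((hxU n).1 hn j).le, hmn⟩

theorem isEquivalent_comp_add_const {E : Type*} [NormedAddCommGroup E] {r : ℕ → E}
    (hr : (fun n => r (n + 1)) ~[atTop] r) (d : ℕ) : (fun n => r (n + d)) ~[atTop] r := by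
  induction d with
  | zero => exact .refl
  | succ d ih => exact (hr.comp_tendsto (tendsto_add_atTop_nat d)).trans ih

theorem isEquivalent_comp_of_le_add {β E : Type*} [NormedAddCommGroup E] {r : ℕ → E}
    {l : Filter β} {f g : β → ℕ} {N : ℕ} (hr : (fun n => r (n + 1)) ~[atTop] r)
    (hf : Tendsto f l atTop) (hfg : ∀ t, f t ≤ g t)
    (hgf : ∀ t, g t ≤ f t + N) : (r ∘ g) ~[l] (r ∘ f) := by
  refine isLittleO_iff.2 fun C hC => ?_
  have hshift : ∀ᶠ t in l, ∀ d : Fin (N + 1), ‖r (f t + d) - r (f t)‖ ≤ C * ‖r (f t)‖ :=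
    eventually_all.2 fun d =>
      hf.eventually (isLittleO_iff.1 (isEquivalent_comp_add_const hr d) hC)
  filter_upwards [hshift] with t ht
  have hd := ht ⟨g t - f t, by have := hgf t; omega⟩
  simpa [Nat.add_sub_of_le (hfg t)] using hd

theorem exists_tendsto_isEquivalent_id {r : ℕ → ℝ} (hr : Tendsto r atTop atTop)
    (hr1 : (fun n => r (n + 1)) ~[atTop] r) :
    ∃ μ : ℝ → ℕ, Tendsto μ atTop atTop ∧ (r ∘ μ) ~[atTop] id := by
  let μ (t : ℝ) : ℕ := sInf {n | t ≤ r n}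
  have hle (t : ℝ) : t ≤ r (μ t) :=
    Nat.sInf_mem (s := {n | t ≤ r n}) (hr.eventually_ge_atTop t).exists
  have hμ : Tendsto μ atTop atTop := by
    refine tendsto_atTop.2 fun n => ?_
    filter_upwards [(Set.finite_Iio n).eventually_all.2 fun i _ => eventually_gt_atTop (r i)]
      with t ht
    exact not_lt.1 fun hlt => (ht _ hlt).not_ge (hle t)
  have hpred : (fun t => r (μ t - 1)) ~[atTop] (r ∘ μ) := by
    refine (hr1.symm.comp_tendsto ((tendsto_sub_atTop_nat 1).comp hμ)).congr_right ?_
    filter_upwards [hμ.eventually_ge_atTop 1] with t ht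
    simp [Nat.sub_add_cancel ht]
  have hsandwich : (id - r ∘ μ) =O[atTop] fun t => r (μ t - 1) - r (μ t) := by
    refine .of_bound 1 ?_
    filter_upwards [hμ.eventually_ge_atTop 1] with t ht
    have hlt : r (μ t - 1) < t := not_le.1 (Nat.notMem_of_lt_sInf (Nat.sub_one_lt_of_lt ht))
    simp only [Pi.sub_apply, id, Function.comp_apply, norm_eq_abs, one_mul]
    rw [abs_of_nonpos (by linarith [hle t]), abs_of_nonpos (by linarith [hle t])]
    linarith
  exact ⟨μ, hμ, .symm (hsandwich.trans_isLittleO hpred)⟩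

theorem IsSyndetic.exists_forall_mem_isEquivalent_id {G : Set ℕ} (hG : IsSyndetic G) {r : ℕ → ℝ}
    (hr : Tendsto r atTop atTop) (hr1 : (fun n => r (n + 1)) ~[atTop] r) :
    ∃ ν : ℝ → ℕ, (∀ t, ν t ∈ G) ∧ Tendsto ν atTop atTop ∧ (r ∘ ν) ~[atTop] id := by
  obtain ⟨N, hN⟩ := hG
  obtain ⟨μ, hμ, hrμ⟩ := exists_tendsto_isEquivalent_id hr hr1
  choose next hnextG hle hnext using hN
  exact ⟨next ∘ μ, fun t => hnextG (μ t), tendsto_atTop_mono (fun t => hle (μ t)) hμ,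
    (isEquivalent_comp_of_le_add hr1 hμ (fun t => hle (μ t)) fun t => hnext (μ t)).trans hrμ⟩

end Sampling

section IntegerForms

theorem eventually_nhds_zero_eq_zero_of_forall_int {κ : Type*} [Finite κ] :
    ∀ᶠ v : EuclideanSpace ℝ κ in 𝓝 0, (∀ i, ∃ m : ℤ, v i = m) → v = 0 := by
  have hcoord : ∀ᶠ v : EuclideanSpace ℝ κ in 𝓝 0, ∀ i, (∃ m : ℤ, v i = m) → v i = 0 :=
    eventually_all.2 fun i =>
      ((PiLp.continuous_apply 2 (fun _ => ℝ) i).tendsto' 0 0 rfl).eventually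
        eventually_nhds_zero_eq_zero_of_int
  filter_upwards [hcoord] with v hv hint
  ext i
  exact hv i (hint i)

variable {κ : Type*} [Fintype κ]

/-- The linear form `∑ i, c i * X i` with integer coefficients `c`, as a continuous functional on
Euclidean space so that its operator norm is available. -/
noncomputable def intForm (c : κ → ℤ) : EuclideanSpace ℝ κ →L[ℝ] ℝ :=
  ∑ i, (c i : ℝ) • EuclideanSpace.proj i

theorem intForm_apply (c : κ → ℤ) (v : EuclideanSpace ℝ κ) :
    intForm c v = ∑ i, (c i : ℝ) * v i := by
  simp [intForm]

theorem norm_intForm_le {c : κ → ℤ} {B : ℝ} (hB : ∀ i, |(c i : ℝ)| ≤ B) :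
    ‖intForm c‖ ≤ B * Fintype.card κ := by
  have hproj (i : κ) : ‖(EuclideanSpace.proj i : EuclideanSpace ℝ κ →L[ℝ] ℝ)‖ ≤ 1 :=
    ContinuousLinearMap.opNorm_le_bound _ zero_le_one fun v => by simpa using PiLp.norm_apply_le v i
  calc ‖intForm c‖ ≤ ∑ i : κ, B * 1 := norm_sum_le_of_le _ fun i _ => by
        rw [norm_smul]
        exact mul_le_mul (hB i) (hproj i) (norm_nonneg _) ((abs_nonneg _).trans (hB i))
    _ = B * Fintype.card κ := by simp [mul_comm]

theorem expGrowthLE_intForm {l : Filter ℝ} (hl : l ≤ atTop) {c : ℝ → κ → ℤ} {B : ℝ → ℝ} {a : ℝ}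
    (hB : ExpGrowthLE l B a) (hc : ∀ᶠ t in l, ∀ i, |(c t i : ℝ)| ≤ B t) :
    ExpGrowthLE l (fun t => intForm (c t)) a := by
  have hcard : ExpGrowthLE l (fun _ => (Fintype.card κ : ℝ)) 0 :=
    expGrowthLE_of_eventually_norm_le hl (.of_forall fun _ => le_rfl)
  refine add_zero a ▸ hB.of_norm_le_mul hcard ?_
  filter_upwards [hc] with t ht
  rw [norm_natCast]
  exact norm_intForm_le fun i => (ht i).trans (le_norm_self _)

theorem exists_intForm_apply_eq_intCast (c : κ → ℤ) {v : EuclideanSpace ℝ κ}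
    (hv : ∀ i, ∃ m : ℤ, v i = m) : ∃ m : ℤ, intForm c v = m := by
  choose m hm using hv
  exact ⟨∑ i, c i * m i, by simp [intForm_apply, hm]⟩

end IntegerForms

theorem tendsto_log_div_log_one {Q : ℕ → ℝ} (hQmono : Monotone Q) (hQ : Tendsto Q atTop atTop)
    {M : ℝ} (hM : ∀ᶠ n : ℕ in atTop, log (Q (n + 1)) ≤ (1 + M / n) * log (Q n)) :
    Tendsto (fun n => log (Q (n + 1)) / log (Q n)) atTop (𝓝 1) := by
  have hupper : Tendsto (fun n : ℕ => 1 + M / n) atTop (𝓝 1) := by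
    simpa using (tendsto_const_div_atTop_nhds_zero_nat M).const_add 1
  refine tendsto_of_tendsto_of_tendsto_of_le_of_le' tendsto_const_nhds hupper ?_ ?_
  · filter_upwards [hQ.eventually_gt_atTop 1] with n hn
    exact (one_le_div (log_pos hn)).2 (log_le_log (one_pos.trans hn) (hQmono n.le_succ))
  · filter_upwards [hQ.eventually_gt_atTop 1, hM] with n hn hMn
    exact (div_le_iff₀ (log_pos hn)).2 hMn

theorem stmt5_general {ι κ : Type*} [Fintype ι] [Fintype κ] {e : ι → EuclideanSpace ℝ κ}
    {τ ω φ : ι → ℝ} (hτ : ∀ j, 0 < τ j) (hτinj : Function.Injective τ)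
    {n₀ : ℕ} (hn₀ : ∀ j, cos (n₀ * ω j + φ j) ≠ 0)
    {Q : ℕ → ℝ} (hQ : Tendsto Q atTop atTop)
    (hQ1 : Tendsto (fun n => log (Q (n + 1)) / log (Q n)) atTop (𝓝 1))
    {l : ℕ → κ → ℤ} {δ η : ι → ℕ → ℝ} {θ : ℕ → ℝ} (hδ : ∀ j, Tendsto (δ j) atTop (𝓝 0))
    (hη : ∀ j, Tendsto (η j) atTop (𝓝 0)) (hθ : Tendsto θ atTop (𝓝 0))
    (hL : ∀ᶠ n : ℕ in atTop, ∀ j, |∑ i, (l n i : ℝ) * e j i| =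
      Q n ^ (-τ j + δ j n) * |cos (n * ω j + φ j) + η j n|)
    (hl : ∀ᶠ n in atTop, ∀ i, |(l n i : ℝ)| ≤ Q n ^ (1 + θ n)) {ε : ℝ} (hε : 0 < ε) :
    ∀ᶠ q : ℝ in atTop, ∀ (lam : ι → ℝ) (u : EuclideanSpace ℝ κ), (∀ j, |lam j| ≤ q ^ τ j) →
      ‖u‖ ≤ q ^ (-1 - ε) → (∀ i, ∃ m : ℤ, (∑ j, lam j • e j + u) i = m) →
      ∑ j, lam j • e j + u = 0 := by
  have hr : Tendsto (fun n => log (Q n)) atTop atTop := tendsto_log_atTop.comp hQ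
  have hr1 : (fun n => log (Q (n + 1))) ~[atTop] fun n => log (Q n) :=
    (isEquivalent_iff_tendsto_one (hr.eventually_ne_atTop 0)).2 hQ1
  obtain ⟨c, hc, hG⟩ := exists_isSyndetic_setOf_le_abs_cos hn₀
  obtain ⟨ν, hνG, hν, hq⟩ := hG.exists_forall_mem_isEquivalent_id hr hr1
  have hq0 : ∀ᶠ t in atTop, 0 < Q (ν t) := (hQ.comp hν).eventually_gt_atTop 0
  have hexp (j : ι) : Tendsto (fun t => -τ j + δ j (ν t)) atTop (𝓝 (-τ j)) := by
    simpa using ((hδ j).comp hν).const_add (-τ j)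
  have hform (j : ι) : ∀ᶠ t in atTop, |intForm (l (ν t)) (e j)| =
      Q (ν t) ^ (-τ j + δ j (ν t)) * |cos (ν t * ω j + φ j) + η j (ν t)| := by
    filter_upwards [hν.eventually hL] with t ht
    rw [intForm_apply, ht]
  have hnorm : ExpGrowthLE atTop (fun t => intForm (l (ν t))) 1 :=
    expGrowthLE_intForm le_rfl (expGrowthLE_rpow le_rfl hq0 hq
      (by simpa using (hθ.comp hν).const_add 1)) (hν.eventually hl)
  have hzero := eventually_forall_eq_zero (e := e)
    (Λ := {v : EuclideanSpace ℝ κ | ∀ i, ∃ m : ℤ, v i = (m : ℝ)}) hτ hτinj hε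
    eventually_nhds_zero_eq_zero_of_forall_int
    (fun t v hv => exists_intForm_apply_eq_intCast (l (ν t)) hv) hnorm
    (fun j => expGrowthLE_of_abs_eq_rpow_mul le_rfl hq0 hq (hexp j) (fun t => abs_cos_le_one _)
      ((hη j).comp hν) (hform j))
    (fun j => expGrowthGE_of_abs_eq_rpow_mul le_rfl hq0 hq (hexp j) hc (fun t => hνG t j)
      ((hη j).comp hν) (hform j))
  filter_upwards [tendsto_log_atTop.eventually hzero, eventually_gt_atTop 0]
    with q hzeroq hqpos lam u hlam hu hint
  simp only [rpow_def_of_pos hqpos] at hlam hu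
  exact hzeroq lam u (fun j => by rw [mul_comm]; exact hlam j) (by rw [mul_comm]; exact hu) hint

/-- Under hypotheses (H): for every ε > 0 and all sufficiently large Q, the only integer
point of the form λ_1e_1+…+λ_ke_k+u with |λ_j| ≤ Q^{τ_j} and u ⟂ Span(e), ‖u‖ ≤ Q^{-1-ε},
is the zero vector. -/
theorem stmt5
    (k p : ℕ) (hk : 1 ≤ k) (hkp : k ≤ p - 1)
    (e : Fin k → EuclideanSpace ℝ (Fin p))
    (τs ωs φs : Fin k → ℝ)
    (hτpos : ∀ j, 0 < τs j) (hτinj : Function.Injective τs)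
    (hosc : {n : ℕ | ∀ j : Fin k, ∀ m : ℤ,
      (n : ℝ) * ωs j + φs j ≠ Real.pi / 2 + m * Real.pi}.Infinite)
    (Q : ℕ → ℕ) (hQmono : StrictMono Q) (hQpos : ∀ n, 0 < Q n)
    (hQgrowth :
      (∃ M : ℝ, 0 < M ∧ ∀ n : ℕ, 1 ≤ n →
        Real.log (Q (n + 1)) ≤ (1 + M / n) * Real.log (Q n)) ∨
      ((∀ j, ωs j = 0) ∧
        Filter.Tendsto (fun n => Real.log (Q (n + 1)) / Real.log (Q n))
          Filter.atTop (nhds 1)))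
    (l : ℕ → Fin p → ℤ)
    (εs ηs : Fin k → ℕ → ℝ) (θs : ℕ → ℝ)
    (hεs : ∀ j, Filter.Tendsto (εs j) Filter.atTop (nhds 0))
    (hηs : ∀ j, Filter.Tendsto (ηs j) Filter.atTop (nhds 0))
    (hθs : Filter.Tendsto θs Filter.atTop (nhds 0))
    (hL : ∀ n : ℕ, 1 ≤ n → ∀ j,
      |∑ i, (l n i : ℝ) * e j i| =
        (Q n : ℝ) ^ (-τs j + εs j n) * |Real.cos ((n : ℝ) * ωs j + φs j) + ηs j n|)
    (hl : ∀ n : ℕ, 1 ≤ n → ∀ i, |(l n i : ℝ)| ≤ (Q n : ℝ) ^ (1 + θs n))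
    :
    ∀ ε : ℝ, 0 < ε → ∃ Q0 : ℝ, ∀ Qr : ℝ, Q0 ≤ Qr →
      ∀ (lam : Fin k → ℝ) (u : EuclideanSpace ℝ (Fin p)),
        (∀ j, |lam j| ≤ Qr ^ τs j) →
        u ∈ (Submodule.span ℝ (Set.range e))ᗮ →
        ‖u‖ ≤ Qr ^ (-1 - ε) →
        (∀ i, ∃ m : ℤ, (∑ j, lam j • e j + u) i = (m : ℝ)) →
        ∑ j, lam j • e j + u = 0 := by
  intro ε hε
  obtain ⟨n₀, hn₀⟩ := hosc.nonempty
  have hcos (j : Fin k) : Real.cos (n₀ * ωs j + φs j) ≠ 0 :=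
    Real.cos_ne_zero_iff.2 fun m => (hn₀ j m).trans_eq (by ring)
  have hQ : Tendsto (fun n => (Q n : ℝ)) atTop atTop :=
    tendsto_natCast_atTop_atTop.comp hQmono.tendsto_atTop
  have hratio := hQgrowth.elim (fun ⟨M, _, hM⟩ => tendsto_log_div_log_one
    (Nat.mono_cast.comp hQmono.monotone) hQ (eventually_atTop.2 ⟨1, hM⟩)) And.right
  refine (eventually_atTop.1 <| stmt5_general hτpos hτinj hcos hQ hratio hεs hηs hθs
    (eventually_atTop.2 ⟨1, hL⟩) (eventually_atTop.2 ⟨1, hl⟩) hε).imp ?_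
  exact fun Q₀ hQ₀ Qr hQr lam u hlam _ => hQ₀ Qr hQr lam u hlam
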